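/- Let a, b ∈ 𝒮(ℝ^{2n}) and define c ∈ 𝒮(ℝ^{2n}) by c(x,ξ) = a(x,ξ) · b(x', 0, ξ). Then there exists C > 0 such that for all h ∈ (0,1] and all u ∈ 𝒮(ℝⁿ), ‖(Op_h^Λ(a) ∘ Op_h(b))u − Op_h^Λ(c)u‖_{L²(ℝⁿ)} ≤ C h^{1/2} ‖u‖_{L²(ℝⁿ)}. -/

import Mathlib

open MeasureTheory
open scoped RealInnerProductSpace

/-- Points of `ℝⁿ` (with `n = m + 1 ≥ 1`) are written `(x', xₙ)` with
`x' ∈ ℝ^{n-1} = EuclideanSpace ℝ (Fin m)` and `xₙ ∈ ℝ`. -/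
abbrev V (m : ℕ) : Type := EuclideanSpace ℝ (Fin m) × ℝ

/-- The quantization `Op_h^Λ(a)u(x) = (2πh)^{-n} ∫ e^{(i/h)(x'·ξ' - y·ξ)} a(x,ξ) u(y) dy dξ`. -/
noncomputable def OpL (m : ℕ) (h : ℝ) (a : V m × V m → ℂ) (u : V m → ℂ) (x : V m) : ℂ :=
  ((2 * Real.pi * h) ^ (m + 1))⁻¹ •
    ∫ p : V m × V m,
      Complex.exp (Complex.I *
        Complex.ofReal ((⟪x.1, p.2.1⟫ - (⟪p.1.1, p.2.1⟫ + p.1.2 * p.2.2)) / h)) *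
      a (x, p.2) * u p.1

/-- The standard quantization `Op_h(b)u(x) = (2πh)^{-n} ∫ e^{(i/h)(x−y)·ξ} b(x,ξ) u(y) dy dξ`. -/
noncomputable def OpS (m : ℕ) (h : ℝ) (b : V m × V m → ℂ) (u : V m → ℂ) (x : V m) : ℂ :=
  ((2 * Real.pi * h) ^ (m + 1))⁻¹ •
    ∫ p : V m × V m,
      Complex.exp (Complex.I *
        Complex.ofReal ((⟪x.1 - p.1.1, p.2.1⟫ + (x.2 - p.1.2) * p.2.2) / h)) *
      b (x, p.2) * u p.1

open scoped SchwartzMap FourierTransform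

/-- dot product on `V m` -/
noncomputable def dotV {m : ℕ} (p q : V m) : ℝ := ⟪p.1, q.1⟫ + p.2 * q.2

/-- unit character -/
noncomputable def ee (t : ℝ) : ℂ := Complex.exp (Complex.I * Complex.ofReal t)

lemma ee_add (s t : ℝ) : ee (s + t) = ee s * ee t := by
  simp [ee, mul_add, Complex.exp_add]

lemma norm_ee (t : ℝ) : ‖ee t‖ = 1 := by
  rw [ee, mul_comm]; exact Complex.norm_exp_ofReal_mul_I t

@[fun_prop]
lemma continuous_ee : Continuous ee := by unfold ee; fun_prop

@[fun_prop]
lemma continuous_dotV {m : ℕ} {X : Type*} [TopologicalSpace X] {f g : X → V m}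
    (hf : Continuous f) (hg : Continuous g) : Continuous (fun x => dotV (f x) (g x)) := by
  unfold dotV; fun_prop

lemma dotV_add_left {m : ℕ} (p q r : V m) : dotV (p + q) r = dotV p r + dotV q r := by
  simp [dotV, inner_add_left]; ring
lemma dotV_sub_left {m : ℕ} (p q r : V m) : dotV (p - q) r = dotV p r - dotV q r := by
  simp [dotV, inner_sub_left]; ring
lemma dotV_smul_left {m : ℕ} (c : ℝ) (p r : V m) : dotV (c • p) r = c * dotV p r := by
  simp [dotV, inner_smul_left]; ring

/-- the linear equivalence with the Euclidean product -/
noncomputable def eqV (m : ℕ) : WithLp 2 (V m) ≃L[ℝ] V m :=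
  WithLp.prodContinuousLinearEquiv 2 ℝ (EuclideanSpace ℝ (Fin m)) ℝ

noncomputable def FS (m : ℕ) : 𝓢(V m, ℂ) →L[ℂ] 𝓢(V m, ℂ) :=
  (SchwartzMap.compCLMOfContinuousLinearEquiv ℂ (eqV m).symm).comp
    ((SchwartzMap.fourierTransformCLM ℂ).comp
      (SchwartzMap.compCLMOfContinuousLinearEquiv ℂ (eqV m)))

lemma int_eqV (m : ℕ) (g : V m → ℂ) :
    ∫ v : WithLp 2 (V m), g (eqV m v) = ∫ v, g v :=
  (WithLp.volume_preserving_symm_measurableEquiv_toLp_prod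
    (EuclideanSpace ℝ (Fin m)) ℝ).integral_comp
    (MeasurableEquiv.measurableEmbedding _) g

lemma inner_eqV (m : ℕ) (v w : WithLp 2 (V m)) : ⟪v, w⟫ = dotV (eqV m w) (eqV m v) := by
  rw [WithLp.prod_inner_apply, dotV, real_inner_comm]
  rfl

lemma FS_apply {m : ℕ} (f : 𝓢(V m, ℂ)) (ρ : V m) :
    FS m f ρ = ∫ ξ, ee (-(2 * Real.pi * dotV ρ ξ)) * f ξ := by
  rw [← int_eqV]
  have : FS m f ρ = 𝓕 (fun v : WithLp 2 (V m) => f (eqV m v)) ((eqV m).symm ρ) := rfl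
  rw [this, Real.fourier_eq']
  refine integral_congr_ae (Filter.Eventually.of_forall fun v => ?_)
  simp only [smul_eq_mul, ee, inner_eqV, ContinuousLinearEquiv.apply_symm_apply]
  congr 2
  push_cast; ring

lemma FS_inv {m : ℕ} (f : 𝓢(V m, ℂ)) (ξ : V m) :
    f ξ = ∫ ρ, ee (2 * Real.pi * dotV ρ ξ) * FS m f ρ := by
  rw [← int_eqV]
  set g : 𝓢(WithLp 2 (V m), ℂ) := SchwartzMap.compCLMOfContinuousLinearEquiv ℂ (eqV m) f with hg
  have h1 : 𝓕⁻ (𝓕 g) = g := FourierTransform.fourierInv_fourier_eq g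
  have h2 : f ξ = 𝓕⁻ (𝓕 g) ((eqV m).symm ξ) := by
    rw [h1, hg]; simp
  rw [h2, SchwartzMap.fourierInv_coe, Real.fourierInv_eq']
  refine integral_congr_ae (Filter.Eventually.of_forall fun v => ?_)
  have h3 : FS m f (eqV m v) = 𝓕 g v := by
    change 𝓕 g ((eqV m).symm (eqV m v)) = _
    simp
  simp only [smul_eq_mul, ee, h3]
  rw [real_inner_comm, inner_eqV]
  congr 2
  simp only [ContinuousLinearEquiv.apply_symm_apply]
  push_cast; ring

/-- uniform decay for the Fourier transform -/
lemma FS_decay (m N : ℕ) : ∃ s : Finset (ℕ × ℕ), ∃ C : ℝ, 0 ≤ C ∧ ∀ (f : 𝓢(V m, ℂ)) (B : ℝ), 0 ≤ B →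
    (∀ i ∈ s, SchwartzMap.seminorm ℂ i.1 i.2 f ≤ B) → ∀ ρ, (1 + ‖ρ‖) ^ N * ‖FS m f ρ‖ ≤ C * B := by
  set q : Seminorm ℂ 𝓢(V m, ℂ) :=
    ((Finset.Iic (N, 0)).sup (fun m' : ℕ × ℕ => SchwartzMap.seminorm ℂ (E := V m) (F := ℂ) m'.1 m'.2)).comp
      (FS m).toLinearMap with hq
  have hqc : Continuous q := by
    have h1 : ∀ t : Finset (ℕ × ℕ), Continuous (t.sup (fun m' : ℕ × ℕ =>
        SchwartzMap.seminorm ℂ (E := V m) (F := ℂ) m'.1 m'.2) : Seminorm ℂ 𝓢(V m, ℂ)) := by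
      intro t
      induction t using Finset.induction_on with
      | empty => rw [Finset.sup_empty]; exact continuous_const
      | insert i t hi ih =>
        rw [Finset.sup_insert, Seminorm.coe_sup]
        exact ((schwartz_withSeminorms ℂ (V m) ℂ).continuous_seminorm i).sup ih
    exact (h1 _).comp (FS m).continuous
  obtain ⟨s, C, -, hC⟩ := Seminorm.bound_of_continuous (schwartz_withSeminorms ℂ (V m) ℂ) q hqc
  refine ⟨s, 2 ^ N * C, by positivity, fun f B hB hf ρ => ?_⟩
  have h1 := SchwartzMap.one_add_le_sup_seminorm_apply (𝕜 := ℂ) (m := (N, 0)) (k := N) (n := 0)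
    le_rfl le_rfl (FS m f) ρ
  rw [norm_iteratedFDeriv_zero] at h1
  refine h1.trans ?_
  rw [mul_assoc]
  refine mul_le_mul_of_nonneg_left ?_ (by positivity)
  refine (hC f).trans ?_
  refine mul_le_mul_of_nonneg_left ?_ C.2
  exact Seminorm.finset_sup_apply_le hB hf

lemma iter_slice {m : ℕ} (b : 𝓢(V m × V m, ℂ)) (y ξ : V m) (n : ℕ) :
    iteratedFDeriv ℝ n (fun ξ => b (y, ξ)) ξ =
      (iteratedFDeriv ℝ n b (y, ξ)).compContinuousLinearMap
        fun _ => ContinuousLinearMap.inr ℝ (V m) (V m) := by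
  have h1 : (fun ξ => b (y, ξ)) =
      (fun p => b ((y, (0 : V m)) + p)) ∘ ContinuousLinearMap.inr ℝ (V m) (V m) := by
    ext ξ; simp
  have h2 : ContDiff ℝ n (fun p => b ((y, (0 : V m)) + p)) :=
    (b.smooth n).comp (contDiff_const.add contDiff_id)
  rw [h1, ContinuousLinearMap.iteratedFDeriv_comp_right _ h2 _ le_rfl, iteratedFDeriv_comp_add_left]
  simp

lemma norm_comp_inr {m n : ℕ} (T : ContinuousMultilinearMap ℝ (fun _ : Fin n => V m × V m) ℂ) :
    ‖T.compContinuousLinearMap fun _ => ContinuousLinearMap.inr ℝ (V m) (V m)‖ ≤ ‖T‖ := by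
  refine (ContinuousMultilinearMap.norm_compContinuousLinearMap_le _ _).trans ?_
  refine mul_le_of_le_one_right (norm_nonneg _) ?_
  refine Finset.prod_le_one (fun _ _ => norm_nonneg _) fun _ _ => ?_
  refine ContinuousLinearMap.opNorm_le_bound _ zero_le_one fun x => ?_
  simp

lemma norm_snd_le' {m : ℕ} (y ξ : V m) : ‖ξ‖ ≤ ‖(y, ξ)‖ := norm_snd_le (y, ξ)

/-- slices -/
noncomputable def slice {m : ℕ} (b : 𝓢(V m × V m, ℂ)) (y : V m) : 𝓢(V m, ℂ) where
  toFun ξ := b (y, ξ)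
  smooth' := b.smooth'.comp (contDiff_const.prodMk contDiff_id)
  decay' k n := by
    obtain ⟨C, hC⟩ := b.decay' k n
    refine ⟨C, fun ξ => le_trans ?_ (hC (y, ξ))⟩
    rw [iter_slice]
    gcongr
    · exact norm_snd_le' y ξ
    · exact norm_comp_inr _

lemma slice_apply {m : ℕ} (b : 𝓢(V m × V m, ℂ)) (y ξ : V m) : slice b y ξ = b (y, ξ) := rfl

lemma slice_seminorm {m : ℕ} (b : 𝓢(V m × V m, ℂ)) (k n M : ℕ) : ∃ C : ℝ, 0 ≤ C ∧ ∀ y,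
    SchwartzMap.seminorm ℂ k n (slice b y) ≤ C * ((1 + ‖y‖) ^ M)⁻¹ := by
  refine ⟨2 ^ (k + M) * (Finset.Iic (k + M, n)).sup
      (fun m' : ℕ × ℕ => SchwartzMap.seminorm ℂ (E := V m × V m) (F := ℂ) m'.1 m'.2) b,
      by positivity, fun y => ?_⟩
  · refine SchwartzMap.seminorm_le_bound ℂ k n _ (M := (2 ^ (k + M) * (Finset.Iic (k + M, n)).sup
      (fun m' : ℕ × ℕ => SchwartzMap.seminorm ℂ (E := V m × V m) (F := ℂ) m'.1 m'.2) b) *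
        ((1 + ‖y‖) ^ M)⁻¹) (by positivity) fun ξ => ?_
    have h := SchwartzMap.one_add_le_sup_seminorm_apply (𝕜 := ℂ) (m := (k + M, n)) (k := k + M)
      (n := n) le_rfl le_rfl b (y, ξ)
    rw [← div_eq_mul_inv, le_div_iff₀ (by positivity)]
    refine le_trans ?_ h
    have h3 : ‖iteratedFDeriv ℝ n (slice b y) ξ‖ ≤ ‖iteratedFDeriv ℝ n b (y, ξ)‖ := by
      change ‖iteratedFDeriv ℝ n (fun ξ => b (y, ξ)) ξ‖ ≤ _
      rw [iter_slice]; exact norm_comp_inr _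
    have h4 : ‖ξ‖ ≤ 1 + ‖(y, ξ)‖ := (norm_snd_le' y ξ).trans (by linarith)
    have h5 : 1 + ‖y‖ ≤ 1 + ‖(y, ξ)‖ := by
      have := norm_fst_le (y, ξ); simp only at this; linarith
    calc _ = ‖ξ‖ ^ k * (1 + ‖y‖) ^ M * ‖iteratedFDeriv ℝ n (slice b y) ξ‖ := by ring
      _ ≤ (1 + ‖(y, ξ)‖) ^ k * (1 + ‖(y, ξ)‖) ^ M * ‖iteratedFDeriv ℝ n b (y, ξ)‖ := by gcongr
      _ = _ := by rw [pow_add]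

lemma slice_diff_seminorm {m : ℕ} (b : 𝓢(V m × V m, ℂ)) (k n : ℕ) : ∃ C : ℝ, 0 ≤ C ∧ ∀ y z,
    SchwartzMap.seminorm ℂ k n (slice b z - slice b y) ≤ C * ‖z - y‖ := by
  refine ⟨SchwartzMap.seminorm ℂ k (n + 1) b, by positivity, fun y z => ?_⟩
  refine SchwartzMap.seminorm_le_bound ℂ k n _ (by positivity) fun ξ => ?_
  have h1 : iteratedFDeriv ℝ n (slice b z - slice b y) ξ =
      (iteratedFDeriv ℝ n b (z, ξ) - iteratedFDeriv ℝ n b (y, ξ)).compContinuousLinearMap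
        fun _ => ContinuousLinearMap.inr ℝ (V m) (V m) := by
    change iteratedFDeriv ℝ n (⇑(slice b z) - ⇑(slice b y)) ξ = _
    rw [iteratedFDeriv_sub_apply ((slice b z).smooth n).contDiffAt ((slice b y).smooth n).contDiffAt]
    change iteratedFDeriv ℝ n (fun ξ => b (z, ξ)) ξ - iteratedFDeriv ℝ n (fun ξ => b (y, ξ)) ξ = _
    rw [iter_slice, iter_slice]
    rfl
  rw [show iteratedFDeriv ℝ n (⇑(slice b z - slice b y)) ξ = _ from h1]
  refine (mul_le_mul_of_nonneg_left (norm_comp_inr _) (by positivity)).trans ?_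
  rcases eq_or_ne (‖ξ‖ ^ k) 0 with h0 | h0
  · rw [h0, zero_mul]; positivity
  have hpos : 0 < ‖ξ‖ ^ k := lt_of_le_of_ne (by positivity) h0.symm
  have h2 : ‖iteratedFDeriv ℝ n b (z, ξ) - iteratedFDeriv ℝ n b (y, ξ)‖ ≤
      (SchwartzMap.seminorm ℂ k (n + 1) b / ‖ξ‖ ^ k) * ‖(z, ξ) - (y, ξ)‖ := by
    have hconv : Convex ℝ {p : V m × V m | p.2 = ξ} := by
      intro p hp q hq s t _ _ hst
      simp only [Set.mem_ofPred_eq] at hp hq ⊢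
      rw [Prod.snd_add, Prod.smul_snd, Prod.smul_snd, hp, hq, ← add_smul, hst, one_smul]
    refine hconv.norm_image_sub_le_of_norm_fderiv_le (𝕜 := ℝ) (fun p _ => ?_) (fun p hp => ?_) rfl rfl
    · exact ((b.smooth (n + 1)).differentiable_iteratedFDeriv (m := n) (by exact_mod_cast Nat.lt_succ_self n)) p
    · rw [norm_fderiv_iteratedFDeriv, le_div_iff₀ hpos, mul_comm]
      refine le_trans ?_ (SchwartzMap.le_seminorm ℂ k (n + 1) b p)
      gcongr
      rw [← (show p.2 = ξ from hp)]; exact norm_snd_le p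
  have h3 : ‖(z, ξ) - (y, ξ)‖ = ‖z - y‖ := by simp [Prod.norm_def]
  rw [h3] at h2
  calc _ ≤ ‖ξ‖ ^ k * ((SchwartzMap.seminorm ℂ k (n + 1) b / ‖ξ‖ ^ k) * ‖z - y‖) := by gcongr
    _ = _ := by field_simp

lemma exists_unif {ι : Type*} (s : Finset ι) (P : ι → ℝ → Prop) (hmono : ∀ i C C', C ≤ C' → P i C → P i C')
    (h : ∀ i, ∃ C : ℝ, 0 ≤ C ∧ P i C) : ∃ C : ℝ, 0 ≤ C ∧ ∀ i ∈ s, P i C := by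
  choose C hC hP using h
  refine ⟨∑ i ∈ s, C i, Finset.sum_nonneg fun i _ => hC i, fun i hi => hmono i _ _ ?_ (hP i)⟩
  exact Finset.single_le_sum (f := C) (fun i _ => hC i) hi

/-- decay of the partial Fourier transform -/
lemma FS_slice {m : ℕ} (b : 𝓢(V m × V m, ℂ)) (M N : ℕ) : ∃ C : ℝ, 0 ≤ C ∧ ∀ y ρ,
    ‖FS m (slice b y) ρ‖ ≤ C * ((1 + ‖y‖) ^ M)⁻¹ * ((1 + ‖ρ‖) ^ N)⁻¹ := by
  obtain ⟨s, C, hC, h⟩ := FS_decay m N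
  obtain ⟨D, hD, h'⟩ := exists_unif s (fun i D => ∀ y,
    SchwartzMap.seminorm ℂ i.1 i.2 (slice b y) ≤ D * ((1 + ‖y‖) ^ M)⁻¹)
    (fun i C C' hCC h y => (h y).trans (by gcongr)) (fun i => slice_seminorm b i.1 i.2 M)
  refine ⟨C * D, by positivity, fun y ρ => ?_⟩
  have := h (slice b y) (D * ((1 + ‖y‖) ^ M)⁻¹) (by positivity) (fun i hi => h' i hi y) ρ
  rw [← div_eq_mul_inv _ ((1 + ‖ρ‖) ^ N), le_div_iff₀ (by positivity)]
  linarith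

lemma FS_slice_diff {m : ℕ} (b : 𝓢(V m × V m, ℂ)) (N : ℕ) : ∃ C : ℝ, 0 ≤ C ∧ ∀ y z ρ,
    ‖FS m (slice b z) ρ - FS m (slice b y) ρ‖ ≤ C * ‖z - y‖ * ((1 + ‖ρ‖) ^ N)⁻¹ := by
  obtain ⟨s, C, hC, h⟩ := FS_decay m N
  obtain ⟨D, hD, h'⟩ := exists_unif s (fun i D => ∀ y z,
    SchwartzMap.seminorm ℂ i.1 i.2 (slice b z - slice b y) ≤ D * ‖z - y‖)
    (fun i C C' hCC h y z => (h y z).trans (by gcongr)) (fun i => slice_diff_seminorm b i.1 i.2)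
  refine ⟨C * D, by positivity, fun y z ρ => ?_⟩
  have := h (slice b z - slice b y) (D * ‖z - y‖) (by positivity) (fun i hi => h' i hi y z) ρ
  rw [map_sub, sub_apply] at this
  rw [← div_eq_mul_inv _ ((1 + ‖ρ‖) ^ N), le_div_iff₀ (by positivity)]
  linarith

instance haarV (m : ℕ) : (volume : Measure (V m)).IsAddHaarMeasure :=
  inferInstanceAs ((volume : Measure (EuclideanSpace ℝ (Fin m))).prod
    (volume : Measure ℝ)).IsAddHaarMeasure

lemma finrank_V (m : ℕ) : Module.finrank ℝ (V m) = m + 1 := by simp [V]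

lemma integrable_core {m : ℕ} (f : 𝓢(V m, ℂ)) {v : V m → ℂ} (hv : Integrable v) (y0 : V m) (h : ℝ) :
    Integrable (fun p : V m × V m => ee ((dotV y0 p.2 - dotV p.1 p.2) / h) * f p.2 * v p.1) := by
  have h1 : Integrable (fun p : V m × V m => v p.1 * f p.2) := hv.mul_prod f.integrable
  have h2 := h1.bdd_mul (c := 1) (f := fun p : V m × V m => ee ((dotV y0 p.2 - dotV p.1 p.2) / h))
    (Continuous.aestronglyMeasurable (by fun_prop)) (Filter.Eventually.of_forall fun p => (norm_ee _).le)
  refine h2.congr (Filter.Eventually.of_forall fun p => ?_)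
  simp only; ring

lemma core_one {m : ℕ} (f : 𝓢(V m, ℂ)) {v : V m → ℂ} (hv : Integrable v) (y0 : V m) {h : ℝ}
    (hh : 0 < h) :
    ((2 * Real.pi * h) ^ (m + 1))⁻¹ •
      ∫ p : V m × V m, ee ((dotV y0 p.2 - dotV p.1 p.2) / h) * f p.2 * v p.1 =
    ∫ τ, FS m f τ * v (y0 + (2 * Real.pi * h) • τ) := by
  have hpi := Real.pi_pos
  have hH : 0 < 2 * Real.pi * h := by positivity
  rw [Measure.volume_eq_prod, integral_prod _ (integrable_core f hv y0 h)]
  have h1 : ∀ z : V m, ∫ ξ, ee ((dotV y0 ξ - dotV z ξ) / h) * f ξ * v z =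
      FS m f ((2 * Real.pi * h)⁻¹ • (z - y0)) * v z := by
    intro z
    rw [integral_mul_const, FS_apply]
    congr 1
    refine integral_congr_ae (Filter.Eventually.of_forall fun ξ => ?_)
    simp only
    congr 2
    rw [dotV_smul_left, dotV_sub_left]
    field_simp
    ring
  simp_rw [h1]
  have h2 : ∀ τ : V m, FS m f τ * v (y0 + (2 * Real.pi * h) • τ) =
      (fun w => FS m f ((2 * Real.pi * h)⁻¹ • w) * v (y0 + w)) ((2 * Real.pi * h) • τ) := by
    intro τ
    simp only [smul_smul, inv_mul_cancel₀ hH.ne', one_smul]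
  rw [integral_congr_ae (Filter.Eventually.of_forall h2)]
  rw [Measure.integral_comp_smul volume
    (fun w => FS m f ((2 * Real.pi * h)⁻¹ • w) * v (y0 + w)) (2 * Real.pi * h), finrank_V, abs_of_pos (by positivity)]
  congr 1
  rw [← integral_add_left_eq_self _ y0]
  simp

lemma integrable_shear {m : ℕ} (g u : 𝓢(V m, ℂ)) (H : ℝ) :
    Integrable (fun p : V m × V m => g p.2 * u (p.1 + H • p.2)) := by
  rw [Measure.volume_eq_prod, integrable_prod_iff' (Continuous.aestronglyMeasurable (by fun_prop))]
  refine ⟨Filter.Eventually.of_forall fun ρ => ?_, ?_⟩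
  · exact ((u.integrable (μ := volume)).comp_add_right (H • ρ)).const_mul (g ρ)
  · have : ∀ ρ : V m, ∫ y : V m, ‖g ρ * u (y + H • ρ)‖ = ‖g ρ‖ * ∫ y, ‖u y‖ := by
      intro ρ
      simp_rw [norm_mul]
      rw [integral_const_mul, integral_add_right_eq_self (fun y => ‖u y‖)]
    simp_rw [this]
    exact g.integrable.norm.mul_const _

lemma integrable_v2 {m : ℕ} (g u : 𝓢(V m, ℂ)) (H : ℝ) :
    Integrable (fun z : V m => ∫ ρ, g ρ * u (z + H • ρ)) :=
  (integrable_shear g u H).integral_prod_left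

lemma fourier_v2 {m : ℕ} (f u : 𝓢(V m, ℂ)) {h : ℝ} (hh : 0 < h) (ξ : V m) :
    ∫ z, ee (-(dotV z ξ / h)) * (∫ ρ, FS m f ρ * u (z + (2 * Real.pi * h) • ρ)) =
      f ξ * ∫ z, ee (-(dotV z ξ / h)) * u z := by
  set H := 2 * Real.pi * h with hH
  have h1 : Integrable (fun p : V m × V m => ee (-(dotV p.1 ξ / h)) * (FS m f p.2 * u (p.1 + H • p.2))) :=
    (integrable_shear (FS m f) u H).bdd_mul (c := 1)
      (Continuous.aestronglyMeasurable (by fun_prop)) (Filter.Eventually.of_forall fun p => (norm_ee _).le)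
  have h2 : ∀ z : V m, ee (-(dotV z ξ / h)) * (∫ ρ, FS m f ρ * u (z + H • ρ)) =
      ∫ ρ, ee (-(dotV z ξ / h)) * (FS m f ρ * u (z + H • ρ)) :=
    fun z => (integral_const_mul _ _).symm
  rw [integral_congr_ae (Filter.Eventually.of_forall h2)]
  rw [integral_integral_swap h1, FS_inv f ξ, ← integral_mul_const]
  refine integral_congr_ae (Filter.Eventually.of_forall fun ρ => ?_)
  simp only
  rw [← integral_add_right_eq_self _ (-(H • ρ)), ← integral_const_mul]
  refine integral_congr_ae (Filter.Eventually.of_forall fun z => ?_)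
  simp only [neg_add_cancel_right]
  rw [show -(dotV (z + -(H • ρ)) ξ / h) = 2 * Real.pi * dotV ρ ξ + -(dotV z ξ / h) by
    rw [← neg_smul, dotV_add_left, dotV_smul_left, hH]; field_simp; ring]
  rw [ee_add]; ring

lemma core_two {m : ℕ} (f g k u : 𝓢(V m, ℂ)) (hk : ∀ ξ, k ξ = f ξ * g ξ) (y0 : V m) {h : ℝ}
    (hh : 0 < h) :
    ∫ p : V m × V m, ee ((dotV y0 p.2 - dotV p.1 p.2) / h) * k p.2 * u p.1 =
    ∫ p : V m × V m, ee ((dotV y0 p.2 - dotV p.1 p.2) / h) * f p.2 *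
      (∫ ρ, FS m g ρ * u (p.1 + (2 * Real.pi * h) • ρ)) := by
  rw [Measure.volume_eq_prod, integral_prod_symm _ (integrable_core k u.integrable y0 h),
    integral_prod_symm _ (integrable_core f (integrable_v2 (FS m g) u _) y0 h)]
  refine integral_congr_ae (Filter.Eventually.of_forall fun ξ => ?_)
  have key : ∀ (c : ℂ) (v : V m → ℂ), ∫ z, ee ((dotV y0 ξ - dotV z ξ) / h) * c * v z =
      ee (dotV y0 ξ / h) * c * ∫ z, ee (-(dotV z ξ / h)) * v z := by
    intro c v
    rw [← integral_const_mul]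
    refine integral_congr_ae (Filter.Eventually.of_forall fun z => ?_)
    simp only
    rw [sub_div, sub_eq_add_neg, ee_add]; ring
  simp only
  rw [key, key, fourier_v2 g u hh ξ, hk]; ring

lemma OpL_eq {m : ℕ} (a : 𝓢(V m × V m, ℂ)) {v : V m → ℂ} (hv : Integrable v) {h : ℝ} (hh : 0 < h)
    (x : V m) : OpL m h a v x =
      ∫ τ, FS m (slice a x) τ * v ((x.1, (0 : ℝ)) + (2 * Real.pi * h) • τ) := by
  rw [← core_one _ hv _ hh]
  simp [OpL, ee, slice_apply, dotV]

lemma OpS_eq {m : ℕ} (b : 𝓢(V m × V m, ℂ)) {v : V m → ℂ} (hv : Integrable v) {h : ℝ} (hh : 0 < h)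
    (x : V m) : OpS m h b v x =
      ∫ τ, FS m (slice b x) τ * v (x + (2 * Real.pi * h) • τ) := by
  rw [← core_one _ hv _ hh, OpS]
  congr 1
  refine integral_congr_ae (Filter.Eventually.of_forall fun p => ?_)
  simp only [← dotV_sub_left]
  rfl

lemma OpL_c {m : ℕ} (a b c : 𝓢(V m × V m, ℂ))
    (hc : ∀ x ξ : V m, c (x, ξ) = a (x, ξ) * b ((x.1, (0:ℝ)), ξ)) (u : 𝓢(V m, ℂ)) {h : ℝ} (hh : 0 < h)
    (x : V m) : OpL m h c u x =
      ∫ τ, FS m (slice a x) τ * (∫ ρ, FS m (slice b (x.1, (0 : ℝ))) ρ *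
        u ((x.1, (0 : ℝ)) + (2 * Real.pi * h) • τ + (2 * Real.pi * h) • ρ)) := by
  have := core_one (slice a x) (integrable_v2 (FS m (slice b (x.1, (0 : ℝ)))) u (2 * Real.pi * h))
    (x.1, (0 : ℝ)) hh
  rw [← this, ← core_two (slice a x) (slice b (x.1, (0:ℝ))) (slice c x) u (fun ξ => hc x ξ) _ hh]
  simp [OpL, ee, slice_apply, dotV]

lemma integrable_decay (E : Type*) [NormedAddCommGroup E] [NormedSpace ℝ E] [FiniteDimensional ℝ E]
    [MeasureSpace E] [BorelSpace E] [(volume : Measure E).IsAddHaarMeasure] (N : ℕ)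
    (hN : Module.finrank ℝ E < N) : Integrable (fun x : E => ((1 + ‖x‖) ^ N)⁻¹) := by
  have := integrable_one_add_norm (E := E) (μ := volume) (r := N) (by exact_mod_cast hN)
  refine this.congr (Filter.Eventually.of_forall fun x => ?_)
  simp only
  rw [Real.rpow_neg (by positivity), Real.rpow_natCast]

lemma integrable_OpS {m : ℕ} (b : 𝓢(V m × V m, ℂ)) (u : 𝓢(V m, ℂ)) {h : ℝ} (hh : 0 < h) :
    Integrable (OpS m h b u) := by
  obtain ⟨C, hC, hb⟩ := FS_slice b (m + 2) (m + 2)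
  obtain ⟨U, hU⟩ : ∃ U : ℝ, ∀ x, ‖u x‖ ≤ U := ⟨_, fun x => SchwartzMap.norm_le_seminorm ℂ u x⟩
  have hdec := integrable_decay (V m) (m + 2) (by rw [finrank_V]; omega)
  refine Integrable.mono' (g := fun y => (C * (∫ ρ : V m, ((1 + ‖ρ‖) ^ (m + 2))⁻¹) * U) *
    ((1 + ‖y‖) ^ (m + 2))⁻¹) (hdec.const_mul _) ?_ (Filter.Eventually.of_forall fun y => ?_)
  · unfold OpS
    refine AEStronglyMeasurable.fun_const_smul ?_ _
    refine StronglyMeasurable.aestronglyMeasurable ?_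
    refine StronglyMeasurable.integral_prod_right' (f := fun q : V m × (V m × V m) =>
      Complex.exp (Complex.I *
        Complex.ofReal ((⟪q.1.1 - q.2.1.1, q.2.2.1⟫ + (q.1.2 - q.2.1.2) * q.2.2.2) / h)) *
      b (q.1, q.2.2) * u q.2.1) ?_
    exact Continuous.stronglyMeasurable (by fun_prop)
  · rw [OpS_eq b u.integrable hh]
    refine (norm_integral_le_integral_norm _).trans ?_
    have h1 : ∀ τ : V m, ‖FS m (slice b y) τ * u (y + (2 * Real.pi * h) • τ)‖ ≤
        (C * ((1 + ‖y‖) ^ (m + 2))⁻¹ * U) * ((1 + ‖τ‖) ^ (m + 2))⁻¹ := by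
      intro τ
      rw [norm_mul]
      calc _ ≤ (C * ((1 + ‖y‖) ^ (m + 2))⁻¹ * ((1 + ‖τ‖) ^ (m + 2))⁻¹) * U := by
            gcongr
            · exact hb y τ
            · exact hU _
        _ = _ := by ring
    refine (integral_mono_of_nonneg (Filter.Eventually.of_forall fun _ => norm_nonneg _)
      (hdec.const_mul _) (Filter.Eventually.of_forall h1)).trans ?_
    rw [integral_const_mul]
    exact le_of_eq (by ring)

open scoped ENNReal

lemma wcs {X : Type*} [MeasurableSpace X] (μ : Measure X) {w f : X → ℝ≥0∞} (hw : Measurable w)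
    (hf : Measurable f) :
    (∫⁻ x, w x * f x ∂μ) ^ 2 ≤ (∫⁻ x, w x ∂μ) * ∫⁻ x, w x * f x ^ 2 ∂μ := by
  have h := ENNReal.lintegral_mul_le_Lp_mul_Lq μ Real.HolderConjugate.two_two
    (f := fun x => w x ^ (1 / 2 : ℝ)) (g := fun x => w x ^ (1 / 2 : ℝ) * f x)
    (by fun_prop) (by fun_prop)
  have e0 : ∀ t : ℝ≥0∞, t ^ (1 / 2 : ℝ) * t ^ (1 / 2 : ℝ) = t := by
    intro t
    rw [← ENNReal.rpow_add_of_nonneg _ _ (by norm_num) (by norm_num)]; norm_num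
  have e1 : ∀ t : ℝ≥0∞, (t ^ (1 / 2 : ℝ)) ^ (2 : ℝ) = t := by
    intro t; rw [← ENNReal.rpow_mul]; norm_num
  have e2 : ∀ x, ((fun x => w x ^ (1 / 2 : ℝ)) * (fun x => w x ^ (1 / 2 : ℝ) * f x)) x = w x * f x := by
    intro x; simp only [Pi.mul_apply]; rw [← mul_assoc, e0]
  have e3 : ∀ x, (w x ^ (1 / 2 : ℝ) * f x) ^ (2 : ℝ) = w x * f x ^ 2 := by
    intro x; rw [ENNReal.mul_rpow_of_nonneg _ _ (by norm_num), e1, ENNReal.rpow_two]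
  simp only [e1, e2, e3] at h
  calc _ ≤ ((∫⁻ x, w x ∂μ) ^ (1 / 2 : ℝ) * (∫⁻ x, w x * f x ^ 2 ∂μ) ^ (1 / 2 : ℝ)) ^ 2 := by gcongr
    _ = _ := by rw [← ENNReal.rpow_two, ENNReal.mul_rpow_of_nonneg _ _ (by norm_num), e1, e1]

lemma lint_affine (G : ℝ → ℝ≥0∞) (hG : Measurable G) (c : ℝ) {H : ℝ} (hH : 0 < H) :
    ∫⁻ s, G (H * (c + s)) = ENNReal.ofReal H⁻¹ * ∫⁻ s, G s := by
  rw [lintegral_add_left_eq_self (fun s => G (H * s)) c,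
    ← lintegral_map (f := G) hG (measurable_const_mul H), Real.map_volume_mul_left hH.ne',
    lintegral_smul_measure, abs_of_pos (inv_pos.2 hH), smul_eq_mul]

/-- weights -/
noncomputable def qq (m : ℕ) (t : ℝ) : ℝ≥0∞ := ENNReal.ofReal (((1 + |t|) ^ (m + 2))⁻¹)

@[fun_prop]
lemma measurable_qq (m : ℕ) : Measurable (qq m) := by unfold qq; fun_prop

lemma qq_fin (m : ℕ) (E : Type*) [NormedAddCommGroup E] [NormedSpace ℝ E] [FiniteDimensional ℝ E]
    [MeasureSpace E] [BorelSpace E] [(volume : Measure E).IsAddHaarMeasure]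
    (hN : Module.finrank ℝ E < m + 2) : ∫⁻ x : E, qq m ‖x‖ ≠ ∞ := by
  have := (integrable_decay E (m + 2) hN).lintegral_lt_top
  simp only [qq, abs_norm]
  exact this.ne

lemma qq_anti (m : ℕ) {s t : ℝ} (hs : 0 ≤ s) (h : s ≤ t) : qq m t ≤ qq m s := by
  unfold qq
  rw [abs_of_nonneg hs, abs_of_nonneg (hs.trans h)]
  gcongr

/-- the trace estimate -/
lemma trace_est {m : ℕ} (u : 𝓢(V m, ℂ)) {H : ℝ} (hH : 0 < H) :
    ∫⁻ x : EuclideanSpace ℝ (Fin m), ∫⁻ p : V m × V m, qq m ‖p.1‖ * qq m ‖p.2‖ *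
      ‖u ((x, (0 : ℝ)) + H • p.1 + H • p.2)‖ₑ ^ 2 ≤
    ((∫⁻ τ : V m, qq m ‖τ‖) * (∫⁻ r : EuclideanSpace ℝ (Fin m), qq m ‖r‖)) *
      (ENNReal.ofReal H⁻¹ * ∫⁻ x, ‖u x‖ₑ ^ 2) := by
  have hu : Measurable u := u.continuous.measurable
  set G : ℝ → ℝ≥0∞ := fun s => ∫⁻ x : EuclideanSpace ℝ (Fin m), ‖u (x, s)‖ₑ ^ 2 with hG
  have hGm : Measurable G := by
    refine Measurable.lintegral_prod_left' (f := fun p : EuclideanSpace ℝ (Fin m) × ℝ => ‖u p‖ₑ ^ 2) ?_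
    fun_prop
  have hGi : ∫⁻ s, G s = ∫⁻ x, ‖u x‖ₑ ^ 2 := by
    rw [Measure.volume_eq_prod, lintegral_prod_symm]
    fun_prop
  rw [lintegral_lintegral_swap (by fun_prop)]
  have h1 : ∀ p : V m × V m, ∫⁻ x : EuclideanSpace ℝ (Fin m), qq m ‖p.1‖ * qq m ‖p.2‖ *
      ‖u ((x, (0 : ℝ)) + H • p.1 + H • p.2)‖ₑ ^ 2 =
      qq m ‖p.1‖ * qq m ‖p.2‖ * G (H * (p.1.2 + p.2.2)) := by
    intro p
    rw [lintegral_const_mul _ (by fun_prop), hG]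
    congr 1
    simp only
    rw [← lintegral_add_right_eq_self (fun x => ‖u (x, H * (p.1.2 + p.2.2))‖ₑ ^ 2)
      (H • p.1.1 + H • p.2.1)]
    refine lintegral_congr fun x => ?_
    congr 3
    ext1
    · simp [add_assoc]
    · simp [mul_add]
  simp_rw [h1]
  rw [Measure.volume_eq_prod, lintegral_prod _ (by fun_prop)]
  simp only
  have h2 : ∀ τ : V m, ∫⁻ ρ : V m, qq m ‖τ‖ * qq m ‖ρ‖ * G (H * (τ.2 + ρ.2)) ≤
      qq m ‖τ‖ * ((∫⁻ r : EuclideanSpace ℝ (Fin m), qq m ‖r‖) *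
      (ENNReal.ofReal H⁻¹ * ∫⁻ x, ‖u x‖ₑ ^ 2)) := by
    intro τ
    simp_rw [mul_assoc]
    rw [lintegral_const_mul _ (by fun_prop)]
    gcongr
    calc _ ≤ ∫⁻ ρ : V m, qq m ‖ρ.1‖ * G (H * (τ.2 + ρ.2)) := by
          refine lintegral_mono fun ρ => ?_
          gcongr
          exact qq_anti m (norm_nonneg _) (norm_fst_le ρ)
      _ = _ := by
          rw [Measure.volume_eq_prod, lintegral_prod _ (by fun_prop)]
          simp only
          have : ∀ r : EuclideanSpace ℝ (Fin m), ∫⁻ s, qq m ‖r‖ * G (H * (τ.2 + s)) =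
              qq m ‖r‖ * (ENNReal.ofReal H⁻¹ * ∫⁻ s, G s) := by
            intro r
            rw [lintegral_const_mul _ (by fun_prop), lint_affine G hGm _ hH]
          simp_rw [this]
          rw [lintegral_mul_const _ (by fun_prop), hGi]
          rfl
  refine (lintegral_mono h2).trans ?_
  rw [lintegral_mul_const _ (by fun_prop), mul_assoc]

lemma integrable_FS_mul {m : ℕ} (g u : 𝓢(V m, ℂ)) (y : V m) (H : ℝ) :
    Integrable (fun ρ => g ρ * u (y + H • ρ)) := by
  refine (g.integrable (μ := volume)).mul_bdd (c := SchwartzMap.seminorm ℂ 0 0 u)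
    (Continuous.aestronglyMeasurable (by fun_prop)) (Filter.Eventually.of_forall fun p => ?_)
  exact SchwartzMap.norm_le_seminorm ℂ u _

lemma integrable_outer {m : ℕ} (g : 𝓢(V m, ℂ)) {v : V m → ℂ} (hv : Integrable v) (y : V m) {H : ℝ}
    (hH : 0 < H) : Integrable (fun τ => g τ * v (y + H • τ)) := by
  have h1 : Integrable (fun τ : V m => v (y + H • τ)) := by
    have := (hv.comp_add_left y)
    exact this.comp_smul hH.ne'
  refine h1.bdd_mul (c := SchwartzMap.seminorm ℂ 0 0 g)
    (Continuous.aestronglyMeasurable (by fun_prop)) (Filter.Eventually.of_forall fun p => ?_)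
  exact SchwartzMap.norm_le_seminorm ℂ g _

lemma pointwise {m : ℕ} (a b c : 𝓢(V m × V m, ℂ))
    (hc : ∀ x ξ : V m, c (x, ξ) = a (x, ξ) * b ((x.1, (0:ℝ)), ξ)) : ∃ A : ℝ, 0 ≤ A ∧
    ∀ h : ℝ, 0 < h → ∀ (u : 𝓢(V m, ℂ)) (x : V m),
      ‖OpL m h a (OpS m h b u) x - OpL m h c u x‖ₑ ≤
        ENNReal.ofReal (A * (2 * Real.pi * h)) * ENNReal.ofReal ((1 + ‖x.2‖)⁻¹) *
        ∫⁻ p : V m × V m, (qq m ‖p.1‖ * qq m ‖p.2‖) *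
          ‖u ((x.1, (0 : ℝ)) + (2 * Real.pi * h) • p.1 + (2 * Real.pi * h) • p.2)‖ₑ := by
  obtain ⟨Ca, hCa, ha⟩ := FS_slice a 1 (m + 3)
  obtain ⟨Cb, hCb, hb⟩ := FS_slice_diff b (m + 2)
  refine ⟨Ca * Cb, by positivity, fun h hh u x => ?_⟩
  have hpi := Real.pi_pos
  have hu : Measurable u := u.continuous.measurable
  have hv := integrable_OpS b u hh
  set H := 2 * Real.pi * h with hHdef
  have hH : 0 < H := by positivity
  set x0 : V m := (x.1, (0 : ℝ)) with hx0
  rw [OpL_eq a hv hh, OpL_c a b c hc u hh, ← integral_sub (integrable_outer _ hv _ hH)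
    (integrable_outer _ (integrable_v2 (FS m (slice b x0)) u H) _ hH)]
  refine (enorm_integral_le_lintegral_enorm _).trans ?_
  have hp : ∫⁻ p : V m × V m, (qq m ‖p.1‖ * qq m ‖p.2‖) * ‖u (x0 + H • p.1 + H • p.2)‖ₑ =
      ∫⁻ τ : V m, ∫⁻ ρ : V m, (qq m ‖τ‖ * qq m ‖ρ‖) * ‖u (x0 + H • τ + H • ρ)‖ₑ := by
    rw [Measure.volume_eq_prod, lintegral_prod _ (by fun_prop)]
  rw [hp, ← lintegral_const_mul' _ _ (ENNReal.mul_ne_top ENNReal.ofReal_ne_top ENNReal.ofReal_ne_top)]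
  refine lintegral_mono fun τ => ?_
  simp only
  rw [← mul_sub, OpS_eq b u.integrable hh, ← hHdef,
    ← integral_sub (integrable_FS_mul _ _ _ _) (integrable_FS_mul _ _ _ _), enorm_mul,
    ← lintegral_const_mul' _ _ (ENNReal.mul_ne_top ENNReal.ofReal_ne_top ENNReal.ofReal_ne_top)]
  refine (mul_le_mul_right (enorm_integral_le_lintegral_enorm _) _).trans ?_
  rw [← lintegral_const_mul' _ _ enorm_ne_top]
  refine lintegral_mono fun ρ => ?_
  simp only
  rw [← sub_mul, enorm_mul, ← mul_assoc, ← mul_assoc]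
  refine mul_le_mul_left ?_ _
  rw [← ofReal_norm, ← ofReal_norm, qq, qq, abs_norm, abs_norm,
    ← ENNReal.ofReal_mul (by positivity), ← ENNReal.ofReal_mul (by positivity),
    ← ENNReal.ofReal_mul (by positivity), ← ENNReal.ofReal_mul (by positivity)]
  refine ENNReal.ofReal_le_ofReal ?_
  have e1 := ha x τ
  have e2 := hb x0 (x0 + H • τ) ρ
  rw [add_sub_cancel_left, norm_smul, Real.norm_of_nonneg hH.le] at e2
  have e3 : (1 + ‖x‖)⁻¹ ≤ (1 + ‖x.2‖)⁻¹ := by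
    have := norm_snd_le x
    gcongr
  have e4 : ‖τ‖ ≤ 1 + ‖τ‖ := by linarith
  calc _ ≤ (Ca * ((1 + ‖x‖) ^ 1)⁻¹ * ((1 + ‖τ‖) ^ (m + 3))⁻¹) *
        (Cb * (H * ‖τ‖) * ((1 + ‖ρ‖) ^ (m + 2))⁻¹) := by gcongr
    _ ≤ (Ca * (1 + ‖x.2‖)⁻¹ * ((1 + ‖τ‖) ^ (m + 3))⁻¹) *
        (Cb * (H * (1 + ‖τ‖)) * ((1 + ‖ρ‖) ^ (m + 2))⁻¹) := by
        rw [pow_one]; gcongr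
    _ = _ := by
        have : (1 + ‖τ‖) ≠ 0 := by positivity
        rw [pow_succ (1 + ‖τ‖) (m + 2)]
        field_simp

/-- if `c(x,ξ) = a(x,ξ) b(x',0,ξ)` then
`‖(Op_h^Λ(a) ∘ Op_h(b))u − Op_h^Λ(c)u‖_{L²} ≤ C h^{1/2} ‖u‖_{L²}` for all `h ∈ (0,1]`. -/
theorem stmt_6 (m : ℕ) (a b c : SchwartzMap (V m × V m) ℂ)
    (hc : ∀ x ξ : V m, c (x, ξ) = a (x, ξ) * b ((x.1, (0:ℝ)), ξ)) :
    ∃ C > 0, ∀ h : ℝ, 0 < h → h ≤ 1 → ∀ u : SchwartzMap (V m) ℂ,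
      eLpNorm (fun x : V m => OpL m h ⇑a (OpS m h ⇑b ⇑u) x - OpL m h ⇑c ⇑u x) 2 volume ≤
        ENNReal.ofReal (C * h ^ ((1:ℝ)/2)) * eLpNorm (⇑u) 2 volume := by
  obtain ⟨A, hA, hpt⟩ := pointwise a b c hc
  set Q1 : ℝ≥0∞ := ∫⁻ τ : V m, qq m ‖τ‖ with hQ1
  set Q' : ℝ≥0∞ := ∫⁻ r : EuclideanSpace ℝ (Fin m), qq m ‖r‖ with hQ'
  set Q : ℝ≥0∞ := ∫⁻ p : V m × V m, qq m ‖p.1‖ * qq m ‖p.2‖ with hQ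
  set W : ℝ≥0∞ := ∫⁻ t : ℝ, ENNReal.ofReal ((1 + ‖t‖)⁻¹) ^ 2 with hW
  have hQ1f : Q1 ≠ ∞ := qq_fin m (V m) (by rw [finrank_V]; omega)
  have hQ'f : Q' ≠ ∞ := qq_fin m _ (by simp)
  have hQf : Q ≠ ∞ := by
    rw [hQ, Measure.volume_eq_prod, lintegral_prod_mul (f := fun τ : V m => qq m ‖τ‖)
      (g := fun τ : V m => qq m ‖τ‖) (by fun_prop) (by fun_prop)]
    exact ENNReal.mul_ne_top hQ1f hQ1f
  have hWf : W ≠ ∞ := by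
    have : W = ∫⁻ t : ℝ, qq 0 ‖t‖ := by
      refine lintegral_congr fun t => ?_
      rw [qq, abs_norm, ← ENNReal.ofReal_pow (by positivity), inv_pow]
    rw [this]
    exact qq_fin 0 ℝ (by simp)
  set T : ℝ≥0∞ := Q * W * (Q1 * Q') with hT
  have hTf : T ≠ ∞ := ENNReal.mul_ne_top (ENNReal.mul_ne_top hQf hWf) (ENNReal.mul_ne_top hQ1f hQ'f)
  have hpi := Real.pi_pos
  set K : ℝ := A ^ 2 * (2 * Real.pi) * T.toReal with hK
  have hK0 : 0 ≤ K := by positivity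
  refine ⟨Real.sqrt K + 1, by positivity, fun h hh _ u => ?_⟩
  have hu : Measurable u := u.continuous.measurable
  set H := 2 * Real.pi * h with hHdef
  have hH : 0 < H := by positivity
  have main : ∫⁻ x : V m, ‖OpL m h a (OpS m h b u) x - OpL m h c u x‖ₑ ^ 2 ≤
      ENNReal.ofReal (K * h) * ∫⁻ x, ‖u x‖ₑ ^ 2 := by
    calc _ ≤ ∫⁻ x : V m, ENNReal.ofReal (A * H) ^ 2 * (ENNReal.ofReal ((1 + ‖x.2‖)⁻¹) ^ 2 *
          (Q * ∫⁻ p : V m × V m, (qq m ‖p.1‖ * qq m ‖p.2‖) *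
          ‖u ((x.1, (0 : ℝ)) + H • p.1 + H • p.2)‖ₑ ^ 2)) := by
          refine lintegral_mono fun x => ?_
          calc _ ≤ (ENNReal.ofReal (A * H) * ENNReal.ofReal ((1 + ‖x.2‖)⁻¹) *
                ∫⁻ p : V m × V m, (qq m ‖p.1‖ * qq m ‖p.2‖) *
                ‖u ((x.1, (0 : ℝ)) + H • p.1 + H • p.2)‖ₑ) ^ 2 := by
                  gcongr; exact hpt h hh u x
            _ ≤ _ := by
              rw [mul_pow, mul_pow, mul_assoc]
              gcongr
              exact wcs volume (by fun_prop) (by fun_prop)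
      _ = ENNReal.ofReal (A * H) ^ 2 * (W * (Q * ∫⁻ x : EuclideanSpace ℝ (Fin m),
          ∫⁻ p : V m × V m, (qq m ‖p.1‖ * qq m ‖p.2‖) *
          ‖u ((x, (0 : ℝ)) + H • p.1 + H • p.2)‖ₑ ^ 2)) := by
          rw [lintegral_const_mul' _ _ (by finiteness)]
          congr 1
          have hJ : Measurable (fun x : EuclideanSpace ℝ (Fin m) =>
              ∫⁻ p : V m × V m, (qq m ‖p.1‖ * qq m ‖p.2‖) *
              ‖u ((x, (0 : ℝ)) + H • p.1 + H • p.2)‖ₑ ^ 2) := by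
            refine Measurable.lintegral_prod_right'
              (f := fun z : EuclideanSpace ℝ (Fin m) × (V m × V m) => (qq m ‖z.2.1‖ * qq m ‖z.2.2‖) *
              ‖u ((z.1, (0 : ℝ)) + H • z.2.1 + H • z.2.2)‖ₑ ^ 2) ?_
            fun_prop
          rw [← lintegral_const_mul _ hJ, hW, mul_comm, ← lintegral_prod_mul (by fun_prop) (by fun_prop)]
          rw [Measure.volume_eq_prod]
          refine lintegral_congr fun x => ?_
          rw [mul_comm]
      _ ≤ ENNReal.ofReal (A * H) ^ 2 * (W * (Q * ((Q1 * Q') *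
          (ENNReal.ofReal H⁻¹ * ∫⁻ x, ‖u x‖ₑ ^ 2)))) := by
          gcongr
          exact trace_est u hH
      _ = (ENNReal.ofReal (A * H) ^ 2 * ENNReal.ofReal H⁻¹ * T) * ∫⁻ x, ‖u x‖ₑ ^ 2 := by
          rw [hT]; ring
      _ = _ := by
          congr 1
          rw [← ENNReal.ofReal_toReal hTf, ← ENNReal.ofReal_pow (by positivity),
            ← ENNReal.ofReal_mul (by positivity), ← ENNReal.ofReal_mul (by positivity)]
          congr 1
          rw [hK, hHdef]
          field_simp
  rw [eLpNorm_eq_lintegral_rpow_enorm_toReal (by norm_num) (by norm_num),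
    eLpNorm_eq_lintegral_rpow_enorm_toReal (by norm_num) (by norm_num)]
  simp only [ENNReal.toReal_ofNat, ENNReal.rpow_two]
  have hC : K * h ≤ ((Real.sqrt K + 1) * h ^ ((1:ℝ)/2)) ^ 2 := by
    rw [mul_pow, ← Real.sqrt_eq_rpow, Real.sq_sqrt hh.le]
    gcongr
    nlinarith [Real.sq_sqrt hK0, Real.sqrt_nonneg K]
  calc _ ≤ (ENNReal.ofReal (((Real.sqrt K + 1) * h ^ ((1:ℝ)/2)) ^ 2) *
        ∫⁻ x, ‖u x‖ₑ ^ 2) ^ (1 / 2 : ℝ) := by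
        gcongr
        exact main.trans (by gcongr)
    _ = _ := by
        rw [ENNReal.mul_rpow_of_nonneg _ _ (by norm_num)]
        congr 1
        rw [ENNReal.ofReal_pow (by positivity), ← ENNReal.rpow_two, ← ENNReal.rpow_mul]
        norm_num
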